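/- (Separation at t=1 by the spectral embedding norm) Suppose for each k = 1,…,n there are differentiable functions λ_k : [0,1] → ℝ and ψ_k : [0,1] → ℝ^V with W(t)ψ_k(t) = λ_k(t)D(t)ψ_k(t), ψ_k(t)ᵀD(t)ψ_j(t) = δ_{kj}, and |λ_k(t)| ≤ 1 for all t∈[0,1]; let I ⊆ {1,…,n} and S(x,t) = Σ_{k∈I} ψ_k(t)(x)². Assume: (A1) at t=0, I contains exactly K eigenvectors supported on C, each associated with a unique cluster C_j (each of size δn/K) and satisfying (1−ε1)/ν(C_j,0) ≤ ψ(x)² ≤ (1+ε1)/ν(C_j,0) for x∈C_j and ψ(x)² ≤ ε1/ν(C,0) for x∈C∖C_j (0 ≤ ε1 < 1), and |I|−K eigenvectors supported on B with ψ(x)² ≤ (1+ε2)/ν(B,0) for x∈B (ε2 ≥ 0); (A2) (#) := d0_low(1−ε1)/d0_up − (δ/(1−δ))·((|I|−K)/K)·(1+ε2) > 0; (i) Δ(0) := min_{i∈I,j∉I}|λ_i(0)−λ_j(0)| ≥ 2Δ for some Δ > 0; (ii) C_conn/d0_low ≤ (Δ/8)·(1/(1+Δ/4))·log(1 + (1/2)·(#)/(1+2ε1));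 and that for t∈(0,1) the evolution equation ∂S/∂t(x,t) = − Σ_{k,j∈I}(ψ_jᵀD'(t)ψ_k)ψ_k(x)ψ_j(x) + 2Σ_{k∈I,j∉I}[ψ_jᵀ(E−λ_k D'(t))ψ_k/(λ_k−λ_j)]ψ_k(x)ψ_j(x) holds, D'(t) being the diagonal matrix with entries Σ_y E(x,y). Then there exists a constant τ such that at t=1, S(x,1) > τ for every x∈C and S(x,1) < τ for every x∈B. -/

import Mathlib

open Finset

/-!
Differentiate `W ψ_k = λ_k D ψ_k` and pair the result with `ψ_j`. For `j = k` this gives the speed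
of `λ_k`, and for `j ≠ k` the `ψ_j`-coordinate of `ψ_k'`; the evolution equation of the embedding
norm `S` follows, since the coordinates of `ψ_k'` along the other `ψ_j` with `j ∈ I` only enter
through symmetric pairs, whose sum is given by differentiating `ψ_jᵀ D ψ_k = δ_{jk}`.

There are as many `ψ_k` as vertices, so `∑_k ψ_k(x)² = 1 / d(x)`. With `ρ = ν_E(V) / d0_low`, where
`ν_E(V) = ∑_{x,y} E(x, y) = 2 C_conn`, this bounds the speed of each `λ_k` by `2ρ`, so that the
eigen-gap stays above `2Δ - 4ρ`; expanding the bilinear forms of the evolution equation over the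
edges of `E`, and applying AM-GM to the sums over `I` and over its complement, it also gives
`|S'| ≤ ρ (1 + 4 / gap) max S`. By Grönwall's inequality the change of `S` on `[0, 1]` is less than
half the distance between the levels of `S(·, 0)` on `C` and on `B`, and A1 and A2 provide these
levels.
-/

namespace SpectralEmbedding

open Matrix

section Calculus

variable {V : Type*} [Fintype V] {s : Set ℝ} {t : ℝ}

lemma hasDerivWithinAt_dotProduct {u v : ℝ → V → ℝ} {u' v' : V → ℝ}
    (hu : HasDerivWithinAt u u' s t) (hv : HasDerivWithinAt v v' s t) :
    HasDerivWithinAt (fun τ => u τ ⬝ᵥ v τ) (u' ⬝ᵥ v t + u t ⬝ᵥ v') s t := by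
  simp only [dotProduct, ← sum_add_distrib]
  exact .fun_sum fun x _ => (hasDerivWithinAt_pi.1 hu x).mul (hasDerivWithinAt_pi.1 hv x)

lemma hasDerivWithinAt_mulVec {m : Type*} [Finite m] {A : ℝ → Matrix m V ℝ} {A' : Matrix m V ℝ}
    {v : ℝ → V → ℝ} {v' : V → ℝ} (hA : ∀ x y, HasDerivWithinAt (fun τ => A τ x y) (A' x y) s t)
    (hv : HasDerivWithinAt v v' s t) :
    HasDerivWithinAt (fun τ => A τ *ᵥ v τ) (A' *ᵥ v t + A t *ᵥ v') s t :=
  hasDerivWithinAt_pi.2 fun x =>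
    hasDerivWithinAt_dotProduct (hasDerivWithinAt_pi.2 (hA x)) hv

lemma norm_sub_le_of_norm_deriv_le_mul_norm {F : Type*} [NormedAddCommGroup F] [NormedSpace ℝ F]
    {f f' : ℝ → F} {a b c : ℝ} (hc : 0 ≤ c)
    (hf : ∀ t ∈ Set.Icc a b, HasDerivWithinAt f (f' t) (Set.Icc a b) t)
    (hbound : ∀ t ∈ Set.Icc a b, ‖f' t‖ ≤ c * ‖f t‖) (ht : t ∈ Set.Icc a b) :
    ‖f t - f a‖ ≤ ‖f a‖ * (Real.exp (c * (t - a)) - 1) := by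
  have hgronwall := norm_le_gronwallBound_of_norm_deriv_right_le (f := fun τ => f τ - f a)
    (δ := 0) (K := c) (ε := c * ‖f a‖)
    (fun τ hτ => (hf τ hτ).continuousWithinAt.sub continuousWithinAt_const)
    (fun τ hτ => ((hf τ (Set.Ico_subset_Icc_self hτ)).mono_of_mem_nhdsWithin
      (Icc_mem_nhdsGE_of_mem hτ)).sub_const _)
    (by simp)
    (fun τ hτ => by
      rw [← mul_add]
      exact (hbound τ (Set.Ico_subset_Icc_self hτ)).trans
        (mul_le_mul_of_nonneg_left (norm_le_norm_sub_add _ _) hc))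
    t ht
  rcases hc.eq_or_lt with rfl | hc
  · simpa [gronwallBound_K0] using hgronwall
  · simpa [gronwallBound_of_K_ne_0 hc.ne', mul_div_cancel_left₀ _ hc.ne'] using hgronwall

end Calculus

section OrthonormalFrame

variable {V ι : Type*} [Fintype V] [Fintype ι] [DecidableEq ι]
  {d : V → ℝ} {φ : ι → V → ℝ}

lemma sum_mul_mul_eq_ite_of_orthonormal [DecidableEq V] (hcard : Fintype.card ι = Fintype.card V)
    (horth : ∀ j k, (φ j * d) ⬝ᵥ φ k = if j = k then 1 else 0) (x y : V) :
    (∑ k, φ k x * φ k y) * d y = if x = y then 1 else 0 := by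
  have hrows : (of fun j x => φ j x * d x) * (of φ)ᵀ = 1 := by
    ext j k
    simpa [mul_apply, one_apply, dotProduct] using horth j k
  rw [mul_eq_one_comm_of_equiv (Fintype.equivOfCardEq hcard)] at hrows
  simpa [mul_apply, one_apply, sum_mul, mul_assoc] using congr_fun₂ hrows x y

lemma sum_dotProduct_mul_eq_of_orthonormal (hcard : Fintype.card ι = Fintype.card V)
    (horth : ∀ j k, (φ j * d) ⬝ᵥ φ k = if j = k then 1 else 0) (w : V → ℝ) (x : V) :
    ∑ j, ((φ j * d) ⬝ᵥ w) * φ j x = w x := by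
  classical
  calc ∑ j, ((φ j * d) ⬝ᵥ w) * φ j x = ∑ y, (∑ j, φ j x * φ j y) * d y * w y := by
        simp only [dotProduct, sum_mul, Pi.mul_apply]
        rw [sum_comm]
        exact sum_congr rfl fun _ _ => sum_congr rfl fun _ _ => by ring
    _ = w x := by simp [sum_mul_mul_eq_ite_of_orthonormal hcard horth]

lemma sum_sq_le_one_div_of_orthonormal (hcard : Fintype.card ι = Fintype.card V)
    (horth : ∀ j k, (φ j * d) ⬝ᵥ φ k = if j = k then 1 else 0) {c : ℝ} (hc : 0 < c) {x : V}
    (hcd : c ≤ d x) : ∑ k, φ k x ^ 2 ≤ 1 / c := by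
  classical
  have hx : (∑ k, φ k x ^ 2) * d x = 1 := by
    simpa [sq] using sum_mul_mul_eq_ite_of_orthonormal hcard horth x x
  rw [le_div_iff₀ hc, ← hx]
  exact mul_le_mul_of_nonneg_left hcd (sum_nonneg fun k _ => sq_nonneg _)

end OrthonormalFrame

section Variation

variable {V ι : Type*} [Fintype V]

/-- The first variation `uᵀ(W' - μ D')v` of the generalized eigenvalue problem `W v = μ D v`, where
the diagonal matrix `D'` is given by the vector `d'` of its diagonal entries. -/
def firstVariation (W' : Matrix V V ℝ) (d' : V → ℝ) (μ : ℝ) (u v : V → ℝ) : ℝ :=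
  u ⬝ᵥ W' *ᵥ v - μ * ((u * d') ⬝ᵥ v)

/-- The spectral embedding norm `S(x) = ∑_{k ∈ I} φ_k(x)²`. -/
def embeddingNorm (I : Finset ι) (φ : ι → V → ℝ) (x : V) : ℝ :=
  ∑ k ∈ I, φ k x ^ 2

/-- The right-hand side of the evolution equation of the spectral embedding norm, for eigenpairs
`(l k, φ k)` of a pencil with velocity `(W', D')`, `D'` being the diagonal matrix of `d'`. -/
noncomputable def embeddingNormVelocity [Fintype ι] [DecidableEq ι] (W' : Matrix V V ℝ) (d' : V → ℝ)
    (l : ι → ℝ) (φ : ι → V → ℝ) (I : Finset ι) (x : V) : ℝ :=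
  -(∑ k ∈ I, ∑ j ∈ I, ((φ j * d') ⬝ᵥ φ k) * (φ k x * φ j x))
    + 2 * ∑ k ∈ I, ∑ j ∈ Iᶜ,
      firstVariation W' d' (l k) (φ j) (φ k) / (l k - l j) * (φ k x * φ j x)

/-- A differentiable family of eigenpairs `(lam k t, ψ k t)`, `t ∈ s`, of the pencil `(W t, D t)`,
orthonormal with respect to `D t`, where the diagonal matrix `D t` is given by the vector `d t` of
its diagonal entries. -/
structure IsEigenframeOn [DecidableEq ι] (s : Set ℝ) (W : ℝ → Matrix V V ℝ) (d : ℝ → V → ℝ)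
    (lam : ι → ℝ → ℝ) (ψ : ι → ℝ → V → ℝ) : Prop where
  differentiableOn_eigenvalue (k : ι) : DifferentiableOn ℝ (lam k) s
  differentiableOn (k : ι) : DifferentiableOn ℝ (ψ k) s
  mulVec_eq (k : ι) : ∀ t ∈ s, W t *ᵥ ψ k t = lam k t • (d t * ψ k t)
  orthonormal : ∀ t ∈ s, ∀ j k, (ψ j t * d t) ⬝ᵥ ψ k t = if j = k then 1 else 0

lemma mul_dotProduct_comm (d u v : V → ℝ) : (u * d) ⬝ᵥ v = (v * d) ⬝ᵥ u := by
  simp only [dotProduct, Pi.mul_apply]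
  exact sum_congr rfl fun x _ => by ring

namespace IsEigenframeOn

variable [DecidableEq ι] {s : Set ℝ} {t : ℝ} {W : ℝ → Matrix V V ℝ} {W' : Matrix V V ℝ}
  {d : ℝ → V → ℝ} {d' : V → ℝ} {lam : ι → ℝ → ℝ} {ψ : ι → ℝ → V → ℝ}

lemma firstVariation_eq (h : IsEigenframeOn s W d lam ψ) (ht : t ∈ s)
    (hs : UniqueDiffWithinAt ℝ s t) (hsymm : (W t).IsSymm)
    (hW : ∀ x y, HasDerivWithinAt (fun τ => W τ x y) (W' x y) s t)
    (hd : HasDerivWithinAt d d' s t) (j k : ι) :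
    firstVariation W' d' (lam k t) (ψ j t) (ψ k t)
      = derivWithin (lam k) s t * (if j = k then 1 else 0)
        + (lam k t - lam j t) * ((ψ j t * d t) ⬝ᵥ derivWithin (ψ k) s t) := by
  have hlam := (h.differentiableOn_eigenvalue k t ht).hasDerivWithinAt
  have hψ := (h.differentiableOn k t ht).hasDerivWithinAt
  have hconst := hasDerivWithinAt_const t s (ψ j t)
  have hleft := hasDerivWithinAt_dotProduct hconst (hasDerivWithinAt_mulVec hW hψ)
  have hright := hasDerivWithinAt_dotProduct hconst (hlam.smul (hd.mul hψ))
  have heq := hs.eq_deriv _ hleft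
    (hright.congr (fun τ hτ => congr_arg _ (h.mulVec_eq k τ hτ))
      (congr_arg _ (h.mulVec_eq k t ht)))
  have hself : ψ j t ⬝ᵥ W t *ᵥ derivWithin (ψ k) s t
      = lam j t * ((ψ j t * d t) ⬝ᵥ derivWithin (ψ k) s t) := by
    rw [dotProduct_mulVec, ← mulVec_transpose, hsymm.eq, h.mulVec_eq j t ht, smul_dotProduct,
      smul_eq_mul, mul_comm (d t)]
  have hassoc : ∀ u v w : V → ℝ, u ⬝ᵥ (v * w) = (u * v) ⬝ᵥ w := fun u v w => by
    simp [dotProduct, mul_assoc]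
  simp only [zero_dotProduct, zero_add, dotProduct_add, dotProduct_smul, smul_eq_mul, hself,
    Pi.mul_apply, hassoc, h.orthonormal t ht j k] at heq
  rw [firstVariation]
  linarith

lemma derivWithin_eigenvalue_eq (h : IsEigenframeOn s W d lam ψ) (ht : t ∈ s)
    (hs : UniqueDiffWithinAt ℝ s t) (hsymm : (W t).IsSymm)
    (hW : ∀ x y, HasDerivWithinAt (fun τ => W τ x y) (W' x y) s t)
    (hd : HasDerivWithinAt d d' s t) (k : ι) :
    derivWithin (lam k) s t = firstVariation W' d' (lam k t) (ψ k t) (ψ k t) := by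
  simp [h.firstVariation_eq ht hs hsymm hW hd k k]

lemma dotProduct_derivWithin_eq_div (h : IsEigenframeOn s W d lam ψ) (ht : t ∈ s)
    (hs : UniqueDiffWithinAt ℝ s t) (hsymm : (W t).IsSymm)
    (hW : ∀ x y, HasDerivWithinAt (fun τ => W τ x y) (W' x y) s t)
    (hd : HasDerivWithinAt d d' s t) {j k : ι} (hjk : lam k t ≠ lam j t) :
    (ψ j t * d t) ⬝ᵥ derivWithin (ψ k) s t
      = firstVariation W' d' (lam k t) (ψ j t) (ψ k t) / (lam k t - lam j t) := by
  have hne : j ≠ k := fun hjk' => hjk (by rw [hjk'])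
  rw [h.firstVariation_eq ht hs hsymm hW hd, if_neg hne, mul_zero, zero_add,
    mul_div_cancel_left₀ _ (sub_ne_zero.2 hjk)]

lemma dotProduct_derivWithin_add_comm (h : IsEigenframeOn s W d lam ψ) (ht : t ∈ s)
    (hs : UniqueDiffWithinAt ℝ s t) (hd : HasDerivWithinAt d d' s t) (j k : ι) :
    (ψ j t * d t) ⬝ᵥ derivWithin (ψ k) s t + (ψ k t * d t) ⬝ᵥ derivWithin (ψ j) s t
      = -((ψ j t * d') ⬝ᵥ ψ k t) := by
  have hψ := fun k => (h.differentiableOn k t ht).hasDerivWithinAt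
  have hconst := (hasDerivWithinAt_const t s (if j = k then (1 : ℝ) else 0)).congr
    (fun τ hτ => h.orthonormal τ hτ j k) (h.orthonormal t ht j k)
  have heq := hs.eq_deriv _ (hasDerivWithinAt_dotProduct ((hψ j).mul hd) (hψ k)) hconst
  rw [add_dotProduct, Pi.mul_apply, mul_dotProduct_comm (d t) (derivWithin (ψ j) s t)] at heq
  linarith

theorem hasDerivWithinAt_embeddingNorm [Fintype ι]
    (h : IsEigenframeOn s W d lam ψ) (hcard : Fintype.card ι = Fintype.card V) (ht : t ∈ s)
    (hs : UniqueDiffWithinAt ℝ s t) (hsymm : (W t).IsSymm)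
    (hW : ∀ x y, HasDerivWithinAt (fun τ => W τ x y) (W' x y) s t)
    (hd : HasDerivWithinAt d d' s t) {I : Finset ι}
    (hgap : ∀ k ∈ I, ∀ j ∉ I, lam k t ≠ lam j t) :
    HasDerivWithinAt (fun τ => embeddingNorm I (ψ · τ))
      (embeddingNormVelocity W' d' (lam · t) (ψ · t) I) s t := by
  refine hasDerivWithinAt_pi.2 fun x => ?_
  set c : ι → ι → ℝ := fun k j => (ψ j t * d t) ⬝ᵥ derivWithin (ψ k) s t
  have hexpand : ∀ k, derivWithin (ψ k) s t x = ∑ j, c k j * ψ j t x := fun k =>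
    (sum_dotProduct_mul_eq_of_orthonormal hcard (h.orthonormal t ht) _ x).symm
  have hinner : 2 * ∑ k ∈ I, ∑ j ∈ I, c k j * (ψ k t x * ψ j t x)
      = -∑ k ∈ I, ∑ j ∈ I, ((ψ j t * d') ⬝ᵥ ψ k t) * (ψ k t x * ψ j t x) := by
    rw [two_mul]
    nth_rw 2 [sum_comm]
    simp only [← sum_add_distrib, ← sum_neg_distrib, ← neg_mul,
      ← h.dotProduct_derivWithin_add_comm ht hs hd]
    exact sum_congr rfl fun k _ => sum_congr rfl fun j _ => by ring
  have houter : ∑ k ∈ I, ∑ j ∈ Iᶜ, c k j * (ψ k t x * ψ j t x)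
      = ∑ k ∈ I, ∑ j ∈ Iᶜ, firstVariation W' d' (lam k t) (ψ j t) (ψ k t)
          / (lam k t - lam j t) * (ψ k t x * ψ j t x) :=
    sum_congr rfl fun k hk => sum_congr rfl fun j hj => by
      rw [← h.dotProduct_derivWithin_eq_div ht hs hsymm hW hd (hgap k hk j (mem_compl.1 hj))]
  have hderiv : HasDerivWithinAt (fun τ => ∑ k ∈ I, ψ k τ x ^ 2)
      (∑ k ∈ I, 2 * ψ k t x * derivWithin (ψ k) s t x) s t := by
    refine .fun_sum fun k _ => ?_
    simpa using (hasDerivWithinAt_pi.1 (h.differentiableOn k t ht).hasDerivWithinAt x).fun_pow 2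
  refine hderiv.congr_deriv ?_
  calc ∑ k ∈ I, 2 * ψ k t x * derivWithin (ψ k) s t x
      = 2 * ∑ k ∈ I, ∑ j, c k j * (ψ k t x * ψ j t x) := by
        simp only [hexpand, mul_sum]
        exact sum_congr rfl fun k _ => sum_congr rfl fun j _ => by ring
    _ = 2 * ∑ k ∈ I, ∑ j ∈ I, c k j * (ψ k t x * ψ j t x)
        + 2 * ∑ k ∈ I, ∑ j ∈ Iᶜ, c k j * (ψ k t x * ψ j t x) := by
        rw [← mul_add, ← sum_add_distrib]
        simp only [sum_add_sum_compl]
    _ = embeddingNormVelocity W' d' (lam · t) (ψ · t) I x := by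
        rw [hinner, houter, embeddingNormVelocity]

end IsEigenframeOn

end Variation

section WeightedGraph

variable {V : Type*} [Fintype V]

/-- The vertex degrees `d(x) = ∑_y W(x, y)` of a weight matrix. -/
def degree (W : Matrix V V ℝ) (x : V) : ℝ :=
  ∑ y, W x y

/-- The volume `ν(A) = ∑_{x ∈ A} d(x)` of a set of vertices. -/
def vol (W : Matrix V V ℝ) (A : Finset V) : ℝ :=
  ∑ x ∈ A, degree W x

variable {W E : Matrix V V ℝ} {c r μ : ℝ}

lemma degree_add_smul (W E : Matrix V V ℝ) (t : ℝ) :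
    degree (W + t • E) = degree W + t • degree E := by
  ext x
  simp [degree, sum_add_distrib, mul_sum]

lemma card_mul_le_vol (hc : ∀ x, c ≤ degree W x) (A : Finset V) : #A * c ≤ vol W A := by
  simpa [vol] using card_nsmul_le_sum A _ c fun x _ => hc x

lemma vol_le_card_mul (hc : ∀ x, degree W x ≤ c) (A : Finset V) : vol W A ≤ #A * c := by
  simpa [vol] using sum_le_card_nsmul A _ c fun x _ => hc x

lemma vol_univ_eq_sum_prod (E : Matrix V V ℝ) : vol E univ = ∑ p : V × V, E p.1 p.2 := by
  simp [vol, degree, Fintype.sum_prod_type]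

lemma vol_univ_eq_two_mul_sum [DecidableEq V] {B C : Finset V} (hdisj : Disjoint B C)
    (hunion : B ∪ C = univ) (hsymm : E.IsSymm)
    (hcross : ∀ x y, ¬((x ∈ B ∧ y ∈ C) ∨ (x ∈ C ∧ y ∈ B)) → E x y = 0) :
    vol E univ = 2 * ∑ x ∈ B, ∑ y ∈ C, E x y := by
  have hdegB : ∀ x ∈ B, degree E x = ∑ y ∈ C, E x y := fun x hx =>
    (sum_subset (subset_univ C) fun y _ hy => hcross x y <| by
      rintro (h | h)
      exacts [hy h.2, disjoint_left.1 hdisj hx h.1]).symm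
  have hdegC : ∀ x ∈ C, degree E x = ∑ y ∈ B, E y x := fun x hx => by
    simp only [degree, ← hsymm.apply x]
    exact (sum_subset (subset_univ B) fun y _ hy => hcross y x <| by
      rintro (h | h)
      exacts [hy h.1, disjoint_left.1 hdisj h.2 hx]).symm
  rw [vol, ← hunion, sum_union hdisj, sum_congr rfl hdegB, sum_congr rfl hdegC, sum_comm (s := C),
    two_mul]

lemma abs_mul_degree_dotProduct_le (hE : ∀ x y, 0 ≤ E x y) (u v : V → ℝ) :
    |(u * degree E) ⬝ᵥ v| ≤ ∑ p : V × V, E p.1 p.2 * (|v p.1| * |u p.1|) := by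
  have hsum : (u * degree E) ⬝ᵥ v = ∑ p : V × V, E p.1 p.2 * (v p.1 * u p.1) := by
    simp only [dotProduct, Pi.mul_apply, degree, Fintype.sum_prod_type, mul_sum, sum_mul]
    exact sum_congr rfl fun y _ => sum_congr rfl fun z _ => by ring
  rw [hsum]
  refine (abs_sum_le_sum_abs _ _).trans_eq (sum_congr rfl fun p _ => ?_)
  rw [abs_mul, abs_mul, abs_of_nonneg (hE _ _)]

lemma abs_firstVariation_le (hE : ∀ x y, 0 ≤ E x y) (hμ : |μ| ≤ 1) (u v : V → ℝ) :
    |firstVariation E (degree E) μ u v|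
      ≤ ∑ p : V × V, E p.1 p.2 * ((|v p.1| + |v p.2|) * |u p.1|) := by
  have hsum : firstVariation E (degree E) μ u v
      = ∑ p : V × V, E p.1 p.2 * ((v p.2 - μ * v p.1) * u p.1) := by
    simp only [firstVariation, dotProduct, mulVec, Pi.mul_apply, degree, Fintype.sum_prod_type,
      mul_sum, sum_mul, ← sum_sub_distrib]
    exact sum_congr rfl fun y _ => sum_congr rfl fun z _ => by ring
  rw [hsum]
  refine (abs_sum_le_sum_abs _ _).trans (sum_le_sum fun p _ => ?_)
  rw [abs_mul, abs_mul, abs_of_nonneg (hE _ _)]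
  have hdiff : |v p.2 - μ * v p.1| ≤ |v p.1| + |v p.2| := by
    refine (abs_sub _ _).trans ?_
    rw [abs_mul, add_comm]
    exact add_le_add_left (mul_le_of_le_one_left (abs_nonneg _) hμ) _
  gcongr
  exact hE _ _

lemma abs_firstVariation_self_le (hE : ∀ x y, 0 ≤ E x y) (hμ : |μ| ≤ 1) {v : V → ℝ}
    (hv : ∀ x, v x ^ 2 ≤ r) : |firstVariation E (degree E) μ v v| ≤ 2 * (vol E univ * r) := by
  refine (abs_firstVariation_le hE hμ v v).trans ?_
  rw [vol_univ_eq_sum_prod, sum_mul, mul_sum]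
  refine sum_le_sum fun p _ => ?_
  have hp : (|v p.1| + |v p.2|) * |v p.1| ≤ 2 * r := by
    nlinarith [sq_nonneg (|v p.1| - |v p.2|), sq_abs (v p.1), sq_abs (v p.2), hv p.1, hv p.2]
  calc E p.1 p.2 * ((|v p.1| + |v p.2|) * |v p.1|) ≤ E p.1 p.2 * (2 * r) :=
        mul_le_mul_of_nonneg_left hp (hE _ _)
    _ = 2 * (E p.1 p.2 * r) := by ring

end WeightedGraph

section LinearFamily

variable {V : Type*} {s : Set ℝ} {t : ℝ}

lemma hasDerivWithinAt_add_smul_apply (W₀ E : Matrix V V ℝ) (x y : V) :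
    HasDerivWithinAt (fun τ : ℝ => (W₀ + τ • E) x y) (E x y) s t := by
  simpa using ((hasDerivWithinAt_id t s).mul_const (E x y)).const_add (W₀ x y)

lemma hasDerivWithinAt_degree_add_smul [Fintype V] (W₀ E : Matrix V V ℝ) :
    HasDerivWithinAt (fun τ : ℝ => degree (W₀ + τ • E)) (degree E) s t :=
  hasDerivWithinAt_pi.2 fun x => .fun_sum fun y _ => hasDerivWithinAt_add_smul_apply W₀ E x y

end LinearFamily

section VelocityBound

variable {V ι : Type*}

lemma sum_abs_mul_abs_le {s : Finset ι} {a b : ι → ℝ} {r : ℝ}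
    (ha : ∑ i ∈ s, a i ^ 2 ≤ r) (hb : ∑ i ∈ s, b i ^ 2 ≤ r) :
    ∑ i ∈ s, |a i| * |b i| ≤ r := by
  have hamgm : ∑ i ∈ s, 2 * (|a i| * |b i|) ≤ ∑ i ∈ s, (a i ^ 2 + b i ^ 2) :=
    sum_le_sum fun i _ => by
      simpa [mul_assoc] using two_mul_le_add_sq |a i| |b i|
  rw [← mul_sum, sum_add_distrib] at hamgm
  linarith

lemma abs_sum_sum_mul_le {P : Type*} [Fintype P] {I J : Finset ι} {w : P → ℝ} {u : ι → ℝ}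
    {a b : ι → P → ℝ} {c : ι → ι → ℝ} {α β : ℝ} (hw : 0 ≤ w) (hb : 0 ≤ b) (hα : 0 ≤ α)
    (haα : ∀ p, ∑ k ∈ I, |u k| * a k p ≤ α) (hbβ : ∀ p, ∑ j ∈ J, |u j| * b j p ≤ β)
    (hc : ∀ k ∈ I, ∀ j ∈ J, |c k j| ≤ ∑ p, w p * (a k p * b j p)) :
    |∑ k ∈ I, ∑ j ∈ J, c k j * (u k * u j)| ≤ (∑ p, w p) * (α * β) := by
  calc |∑ k ∈ I, ∑ j ∈ J, c k j * (u k * u j)|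
      ≤ ∑ k ∈ I, ∑ j ∈ J, |c k j * (u k * u j)| :=
        (abs_sum_le_sum_abs _ _).trans (sum_le_sum fun k _ => abs_sum_le_sum_abs _ _)
    _ ≤ ∑ k ∈ I, ∑ j ∈ J, (∑ p, w p * (a k p * b j p)) * (|u k| * |u j|) :=
        sum_le_sum fun k hk => sum_le_sum fun j hj => by
          rw [abs_mul, abs_mul]
          exact mul_le_mul_of_nonneg_right (hc k hk j hj) (by positivity)
    _ = ∑ p, w p * ((∑ k ∈ I, |u k| * a k p) * ∑ j ∈ J, |u j| * b j p) := by
        simp only [sum_mul_sum]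
        simp only [mul_sum, sum_mul]
        rw [sum_comm (s := univ)]
        refine sum_congr rfl fun k _ => ?_
        rw [sum_comm (s := univ)]
        exact sum_congr rfl fun j _ => sum_congr rfl fun p _ => by ring
    _ ≤ (∑ p, w p) * (α * β) := by
        rw [sum_mul]
        exact sum_le_sum fun p _ => mul_le_mul_of_nonneg_left
          (mul_le_mul (haα p) (hbβ p)
            (sum_nonneg fun j _ => mul_nonneg (abs_nonneg _) (hb j p)) hα) (hw p)

lemma abs_embeddingNormVelocity_le [Fintype V] [Fintype ι] [DecidableEq ι] {E : Matrix V V ℝ}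
    {l : ι → ℝ} {φ : ι → V → ℝ} {I : Finset ι} {g r M : ℝ} (hE : ∀ x y, 0 ≤ E x y)
    (hl : ∀ k, |l k| ≤ 1) (hg : 0 < g) (hgap : ∀ k ∈ I, ∀ j ∉ I, g ≤ |l k - l j|)
    (hr : ∀ x, ∑ k, φ k x ^ 2 ≤ r) (hM : ∀ x, embeddingNorm I φ x ≤ M) (x : V) :
    |embeddingNormVelocity E (degree E) l φ I x| ≤ vol E univ * r * (1 + 4 / g) * M := by
  have hM₀ : 0 ≤ M := (sum_nonneg fun k _ => sq_nonneg (φ k x)).trans (hM x)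
  have hI : ∀ y, ∑ k ∈ I, |φ k x| * |φ k y| ≤ M := fun y => sum_abs_mul_abs_le (hM x) (hM y)
  have hJ : ∀ (J : Finset ι) y, ∑ k ∈ J, |φ k x| * |φ k y| ≤ r := fun J y =>
    (sum_le_univ_sum_of_nonneg fun _ => by positivity).trans (sum_abs_mul_abs_le (hr x) (hr y))
  have hw : (0 : V × V → ℝ) ≤ fun p => E p.1 p.2 := fun p => hE _ _
  have hinner : |∑ k ∈ I, ∑ j ∈ I, ((φ j * degree E) ⬝ᵥ φ k) * (φ k x * φ j x)|
      ≤ vol E univ * (M * r) := by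
    rw [vol_univ_eq_sum_prod]
    exact abs_sum_sum_mul_le (a := fun k p => |φ k p.1|) (b := fun j p => |φ j p.1|) hw
      (fun _ _ => abs_nonneg _) hM₀ (fun p => hI p.1) (fun p => hJ I p.1)
      fun k _ j _ => abs_mul_degree_dotProduct_le hE (φ j) (φ k)
  have houter : |∑ k ∈ I, ∑ j ∈ Iᶜ,
      firstVariation E (degree E) (l k) (φ j) (φ k) / (l k - l j) * (φ k x * φ j x)|
        ≤ vol E univ * ((M + M) * (r / g)) := by
    rw [vol_univ_eq_sum_prod]
    refine abs_sum_sum_mul_le (a := fun k p => |φ k p.1| + |φ k p.2|)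
      (b := fun j p => |φ j p.1| / g) hw
      (fun _ _ => div_nonneg (abs_nonneg _) hg.le) (add_nonneg hM₀ hM₀) (fun p => ?_)
      (fun p => ?_) fun k hk j hj => ?_
    · simp only [mul_add, sum_add_distrib]
      exact add_le_add (hI p.1) (hI p.2)
    · simp only [← mul_div_assoc, ← sum_div]
      exact div_le_div_of_nonneg_right (hJ Iᶜ p.1) hg.le
    · rw [abs_div]
      refine (div_le_div_of_nonneg_left (abs_nonneg _) hg (hgap k hk j (mem_compl.1 hj))).trans ?_
      refine (div_le_div_of_nonneg_right (abs_firstVariation_le hE (hl k) _ _) hg.le).trans_eq ?_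
      simp only [sum_div, mul_div_assoc]
  calc |embeddingNormVelocity E (degree E) l φ I x|
      ≤ vol E univ * (M * r) + 2 * (vol E univ * ((M + M) * (r / g))) := by
        refine (abs_add_le _ _).trans ?_
        rw [abs_neg, abs_mul, abs_two]
        linarith
    _ = vol E univ * r * (1 + 4 / g) * M := by ring

end VelocityBound

section Smallness

variable {ρ Δ g u : ℝ}

lemma four_mul_lt_of_le_mul_log (hΔ : 0 < Δ) (hu₀ : 0 < u) (hu₁ : u ≤ 1)
    (hρ : ρ ≤ Δ / 4 * (1 / (1 + Δ / 4)) * Real.log (1 + u)) : 4 * ρ < Δ := by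
  have hlog : Real.log (1 + u) < 1 := by
    linarith [Real.log_lt_sub_one_of_pos (by linarith : 0 < 1 + u) (by linarith)]
  have hlog₀ : 0 < Real.log (1 + u) := Real.log_pos (by linarith)
  have hfactor : Δ / 4 * (1 / (1 + Δ / 4)) ≤ Δ / 4 :=
    mul_le_of_le_one_right (by positivity) (div_le_one_of_le₀ (by linarith) (by positivity))
  nlinarith

lemma exp_mul_lt_one_add_of_le_mul_log (hΔ : 0 < Δ) (hg : Δ < g) (hρ₀ : 0 ≤ ρ) (hu : 0 < u)
    (hρ : ρ ≤ Δ / 4 * (1 / (1 + Δ / 4)) * Real.log (1 + u)) :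
    Real.exp (ρ * (1 + 4 / g)) < 1 + u := by
  rw [← Real.lt_log_iff_exp_lt (by linarith)]
  rcases hρ₀.eq_or_lt with rfl | hρ₀
  · simpa using Real.log_pos (by linarith : 1 < 1 + u)
  · calc ρ * (1 + 4 / g) < ρ * (1 + 4 / Δ) := by gcongr
      _ ≤ Δ / 4 * (1 / (1 + Δ / 4)) * Real.log (1 + u) * (1 + 4 / Δ) := by gcongr
      _ = Real.log (1 + u) := by
        field_simp
        ring

end Smallness

section Perturbation

variable {V ι : Type*} [Fintype V] [Fintype ι] [DecidableEq ι]

/-- An eigenframe of the random walks `D(t)⁻¹ W(t)` on the weighted graphs `W(t) = W₀ + t E`,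
`t ∈ [0, 1]`, where `D(t)` is the diagonal matrix of the degrees of `W(t)`. -/
abbrev IsWalkEigenframe (W₀ E : Matrix V V ℝ) (lam : ι → ℝ → ℝ) (ψ : ι → ℝ → V → ℝ) : Prop :=
  IsEigenframeOn (Set.Icc 0 1) (fun t => W₀ + t • E) (fun t => degree (W₀ + t • E)) lam ψ

namespace IsWalkEigenframe

variable {W₀ E : Matrix V V ℝ} {lam : ι → ℝ → ℝ} {ψ : ι → ℝ → V → ℝ} {t c : ℝ}

lemma sum_sq_le (h : IsWalkEigenframe W₀ E lam ψ) (hcard : Fintype.card ι = Fintype.card V)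
    (hE : ∀ x y, 0 ≤ E x y) (hc : 0 < c) (hdeg : ∀ x, c ≤ degree W₀ x) (ht : t ∈ Set.Icc 0 1)
    (x : V) : ∑ k, ψ k t x ^ 2 ≤ 1 / c := by
  refine sum_sq_le_one_div_of_orthonormal hcard (h.orthonormal t ht) hc ((hdeg x).trans ?_)
  rw [degree_add_smul]
  exact le_add_of_nonneg_right (mul_nonneg ht.1 (sum_nonneg fun y _ => hE x y))

variable (h : IsWalkEigenframe W₀ E lam ψ) (hcard : Fintype.card ι = Fintype.card V)
  (hW₀ : W₀.IsSymm) (hEsymm : E.IsSymm) (hE : ∀ x y, 0 ≤ E x y)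
  (hlam : ∀ k, ∀ t ∈ Set.Icc (0 : ℝ) 1, |lam k t| ≤ 1) (hc : 0 < c)
  (hdeg : ∀ x, c ≤ degree W₀ x)

include h hcard hW₀ hEsymm hE hlam hc hdeg

lemma abs_eigenvalue_sub_le (ht : t ∈ Set.Icc 0 1) (k : ι) :
    |lam k t - lam k 0| ≤ 2 * (vol E univ / c) := by
  have hspeed : ∀ τ ∈ Set.Icc (0 : ℝ) 1,
      ‖derivWithin (lam k) (Set.Icc 0 1) τ‖ ≤ 2 * (vol E univ / c) := fun τ hτ => by
    rw [h.derivWithin_eigenvalue_eq hτ (uniqueDiffOn_Icc_zero_one τ hτ) (hW₀.add (hEsymm.smul τ))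
      (hasDerivWithinAt_add_smul_apply W₀ E) (hasDerivWithinAt_degree_add_smul W₀ E),
      div_eq_mul_one_div]
    exact abs_firstVariation_self_le hE (hlam k τ hτ) fun x =>
      (single_le_sum (f := fun k => ψ k τ x ^ 2) (fun _ _ => sq_nonneg _) (mem_univ k)).trans
        (h.sum_sq_le hcard hE hc hdeg hτ x)
  have hmvt := (convex_Icc (0 : ℝ) 1).norm_image_sub_le_of_norm_hasDerivWithin_le
    (fun τ hτ => (h.differentiableOn_eigenvalue k τ hτ).hasDerivWithinAt) hspeed
    (Set.left_mem_Icc.2 zero_le_one) ht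
  rw [sub_zero, Real.norm_of_nonneg ht.1] at hmvt
  exact hmvt.trans (mul_le_of_le_one_right ((norm_nonneg _).trans (hspeed t ht)) ht.2)

lemma sub_le_abs_eigenvalue_sub (ht : t ∈ Set.Icc 0 1) (j k : ι) :
    |lam k 0 - lam j 0| - 4 * (vol E univ / c) ≤ |lam k t - lam j t| := by
  have hk := abs_le.1 (abs_eigenvalue_sub_le h hcard hW₀ hEsymm hE hlam hc hdeg ht k)
  have hj := abs_le.1 (abs_eigenvalue_sub_le h hcard hW₀ hEsymm hE hlam hc hdeg ht j)
  cases abs_cases (lam k 0 - lam j 0) <;> cases abs_cases (lam k t - lam j t) <;> linarith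

theorem norm_embeddingNorm_sub_le {I : Finset ι} {g : ℝ} (hg : 0 < g)
    (hgap : ∀ t ∈ Set.Icc (0 : ℝ) 1, ∀ k ∈ I, ∀ j ∉ I, g ≤ |lam k t - lam j t|) :
    ‖embeddingNorm I (ψ · 1) - embeddingNorm I (ψ · 0)‖
      ≤ ‖embeddingNorm I (ψ · 0)‖ * (Real.exp (vol E univ / c * (1 + 4 / g)) - 1) := by
  have hvol : 0 ≤ vol E univ := sum_nonneg fun x _ => sum_nonneg fun y _ => hE x y
  have hevolution : ∀ t ∈ Set.Icc (0 : ℝ) 1,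
      HasDerivWithinAt (fun τ => embeddingNorm I (ψ · τ))
        (embeddingNormVelocity E (degree E) (lam · t) (ψ · t) I) (Set.Icc 0 1) t := fun t ht =>
    h.hasDerivWithinAt_embeddingNorm hcard ht (uniqueDiffOn_Icc_zero_one t ht)
      (hW₀.add (hEsymm.smul t)) (hasDerivWithinAt_add_smul_apply W₀ E)
      (hasDerivWithinAt_degree_add_smul W₀ E)
      fun k hk j hj => sub_ne_zero.1 (abs_pos.1 (hg.trans_le (hgap t ht k hk j hj)))
  have hvelocity : ∀ t ∈ Set.Icc (0 : ℝ) 1,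
      ‖embeddingNormVelocity E (degree E) (lam · t) (ψ · t) I‖
        ≤ vol E univ / c * (1 + 4 / g) * ‖embeddingNorm I (ψ · t)‖ := fun t ht =>
    (pi_norm_le_iff_of_nonneg (by positivity)).2 fun x => by
      rw [div_eq_mul_one_div]
      exact abs_embeddingNormVelocity_le hE (hlam · t ht) hg (hgap t ht)
        (h.sum_sq_le hcard hE hc hdeg ht)
        (fun y => (le_abs_self _).trans (norm_le_pi_norm (embeddingNorm I (ψ · t)) y)) x
  simpa using norm_sub_le_of_norm_deriv_le_mul_norm (by positivity) hevolution hvelocity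
    (Set.right_mem_Icc.2 zero_le_one)

theorem norm_embeddingNorm_sub_lt {I : Finset ι} {Δ M u : ℝ} (hΔ : 0 < Δ)
    (hgap₀ : ∀ k ∈ I, ∀ j ∉ I, 2 * Δ ≤ |lam k 0 - lam j 0|) (hM : 0 < M)
    (hS : ‖embeddingNorm I (ψ · 0)‖ ≤ M) (hu₀ : 0 < u) (hu₁ : u ≤ 1)
    (hsmall : vol E univ / c ≤ Δ / 4 * (1 / (1 + Δ / 4)) * Real.log (1 + u)) :
    ‖embeddingNorm I (ψ · 1) - embeddingNorm I (ψ · 0)‖ < M * u := by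
  have hρ : 0 ≤ vol E univ / c :=
    div_nonneg (sum_nonneg fun x _ => sum_nonneg fun y _ => hE x y) hc.le
  -- Since `log (1 + u) < u`, a gap strictly larger than `Δ` survives: the final bound is strict.
  obtain ⟨g, hg⟩ : ∃ g, g = 2 * Δ - 4 * (vol E univ / c) := ⟨_, rfl⟩
  have hΔg : Δ < g := by linarith [four_mul_lt_of_le_mul_log hΔ hu₀ hu₁ hsmall]
  have hgap : ∀ t ∈ Set.Icc (0 : ℝ) 1, ∀ k ∈ I, ∀ j ∉ I, g ≤ |lam k t - lam j t| :=
    fun t ht k hk j hj => by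
      linarith [hgap₀ k hk j hj,
        h.sub_le_abs_eigenvalue_sub hcard hW₀ hEsymm hE hlam hc hdeg ht j k]
  have hg₀ : 0 < g := hΔ.trans hΔg
  calc ‖embeddingNorm I (ψ · 1) - embeddingNorm I (ψ · 0)‖
      ≤ ‖embeddingNorm I (ψ · 0)‖ * (Real.exp (vol E univ / c * (1 + 4 / g)) - 1) :=
        h.norm_embeddingNorm_sub_le hcard hW₀ hEsymm hE hlam hc hdeg hg₀ hgap
    _ ≤ M * (Real.exp (vol E univ / c * (1 + 4 / g)) - 1) :=
        mul_le_mul_of_nonneg_right hS (sub_nonneg.2 (Real.one_le_exp (by positivity)))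
    _ < M * u := by
        gcongr
        linarith [exp_mul_lt_one_add_of_le_mul_log hΔ hΔg hρ hu₀ hsmall]

theorem exists_threshold {I : Finset ι} {Δ lo hi M : ℝ} (hΔ : 0 < Δ)
    (hgap₀ : ∀ k ∈ I, ∀ j ∉ I, 2 * Δ ≤ |lam k 0 - lam j 0|) {B C : Finset V}
    (hcover : ∀ x, x ∈ B ∨ x ∈ C) (hhi : ∀ x ∈ C, hi ≤ embeddingNorm I (ψ · 0) x)
    (hlo : ∀ x ∈ B, embeddingNorm I (ψ · 0) x ≤ lo)
    (hM : ∀ x ∈ C, embeddingNorm I (ψ · 0) x ≤ M)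
    (hlo₀ : 0 ≤ lo) (hlohi : lo < hi) (hhiM : hi ≤ M)
    (hsmall : vol E univ / c
      ≤ Δ / 4 * (1 / (1 + Δ / 4)) * Real.log (1 + (hi - lo) / (2 * M))) :
    ∃ τ, (∀ x ∈ C, τ < embeddingNorm I (ψ · 1) x) ∧ ∀ x ∈ B, embeddingNorm I (ψ · 1) x < τ := by
  have hM₀ : 0 < M := by linarith
  have hnorm : ‖embeddingNorm I (ψ · 0)‖ ≤ M :=
    (pi_norm_le_iff_of_nonneg hM₀.le).2 fun x =>
      (Real.norm_of_nonneg (sum_nonneg fun k _ => sq_nonneg _)).trans_le <|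
        (hcover x).elim (fun hx => (hlo x hx).trans (hlohi.le.trans hhiM)) (hM x)
  have hchange : ‖embeddingNorm I (ψ · 1) - embeddingNorm I (ψ · 0)‖ < (hi - lo) / 2 := by
    refine (h.norm_embeddingNorm_sub_lt hcard hW₀ hEsymm hE hlam hc hdeg hΔ hgap₀ hM₀ hnorm
      (div_pos (sub_pos.2 hlohi) (by positivity))
      (div_le_one_of_le₀ (by linarith) (by positivity)) hsmall).trans_eq ?_
    field_simp
  have hpointwise : ∀ x,
      |embeddingNorm I (ψ · 1) x - embeddingNorm I (ψ · 0) x| < (hi - lo) / 2 := fun x =>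
    (norm_le_pi_norm (embeddingNorm I (ψ · 1) - embeddingNorm I (ψ · 0)) x).trans_lt hchange
  refine ⟨(lo + hi) / 2, fun x hx => ?_, fun x hx => ?_⟩
  · linarith [(abs_lt.1 (hpointwise x)).1, hhi x hx]
  · linarith [(abs_lt.1 (hpointwise x)).2, hlo x hx]

end IsWalkEigenframe

end Perturbation

section InitialProfile

variable {V ι κ : Type*} [Fintype V] [Fintype κ] [DecidableEq ι]

/-- Assumption A1: among the eigenvectors `φ k`, `k ∈ I`, of the weighted graph `W`, there is one
`φ (σ j)` for each cluster `Cl j`, which is supported on the union `C` of the clusters and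
concentrated evenly on `Cl j`; the others are supported on the background `B` and delocalized. -/
structure IsClusterLocalized (W : Matrix V V ℝ) (B C : Finset V) (Cl : κ → Finset V)
    (I : Finset ι) (σ : κ → ι) (φ : ι → V → ℝ) (ε₁ ε₂ : ℝ) : Prop where
  injective : Function.Injective σ
  mem (j : κ) : σ j ∈ I
  eq_zero_of_mem_background (j : κ) : ∀ x ∈ B, φ (σ j) x = 0
  eq_zero_of_mem_clusters : ∀ k ∈ I, k ∉ univ.image σ → ∀ x ∈ C, φ k x = 0
  le_sq (j : κ) : ∀ x ∈ Cl j, (1 - ε₁) / vol W (Cl j) ≤ φ (σ j) x ^ 2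
  sq_le (j : κ) : ∀ x ∈ Cl j, φ (σ j) x ^ 2 ≤ (1 + ε₁) / vol W (Cl j)
  sq_le_of_notMem (j : κ) : ∀ x ∈ C, x ∉ Cl j → φ (σ j) x ^ 2 ≤ ε₁ / vol W C
  sq_le_of_mem_background : ∀ k ∈ I, k ∉ univ.image σ → ∀ x ∈ B, φ k x ^ 2 ≤ (1 + ε₂) / vol W B

/-- The quantity `(#)` of Assumption A2, as a function of the proportion `δ` of clustered vertices,
the numbers `K` of clusters and `i` of eigenvectors, and the bounds `dlow`, `dup` on the degrees. -/
noncomputable def separationMargin (δ K i dlow dup ε₁ ε₂ : ℝ) : ℝ :=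
  dlow * (1 - ε₁) / dup - δ / (1 - δ) * ((i - K) / K) * (1 + ε₂)

lemma div_sub_mul_div_eq_separationMargin_div {δ K n dlow dup : ℝ} (i ε₁ ε₂ : ℝ) (hδ₀ : 0 < δ)
    (hδ₁ : δ < 1) (hK : 0 < K) (hn : 0 < n) (hdlow : 0 < dlow) (hdup : 0 < dup) :
    (1 - ε₁) / (δ * n / K * dup) - (i - K) * ((1 + ε₂) / ((1 - δ) * n * dlow))
      = separationMargin δ K i dlow dup ε₁ ε₂ / (δ * n / K * dlow) := by
  have h1δ : 1 - δ ≠ 0 := (sub_pos.2 hδ₁).ne'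
  rw [separationMargin]
  field_simp

namespace IsClusterLocalized

variable {W : Matrix V V ℝ} {B C : Finset V} {Cl : κ → Finset V} {I : Finset ι} {σ : κ → ι}
  {φ : ι → V → ℝ} {ε₁ ε₂ c m r : ℝ} {x : V}

lemma image_subset (h : IsClusterLocalized W B C Cl I σ φ ε₁ ε₂) : univ.image σ ⊆ I :=
  image_subset_iff.2 fun j _ => h.mem j

lemma card_sdiff_image (h : IsClusterLocalized W B C Cl I σ φ ε₁ ε₂) :
    (#(I \ univ.image σ) : ℝ) = #I - Fintype.card κ := by
  rw [cast_card_sdiff h.image_subset, card_image_of_injective _ h.injective, card_univ]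

lemma card_le_card (h : IsClusterLocalized W B C Cl I σ φ ε₁ ε₂) : Fintype.card κ ≤ #I :=
  card_le_card_of_injOn σ (fun j _ => h.mem j) h.injective.injOn

lemma embeddingNorm_eq_sum_image (h : IsClusterLocalized W B C Cl I σ φ ε₁ ε₂) (hx : x ∈ C) :
    embeddingNorm I φ x = ∑ j, φ (σ j) x ^ 2 := by
  rw [embeddingNorm, ← sum_image (f := fun k => φ k x ^ 2) h.injective.injOn]
  refine (sum_subset h.image_subset fun k hk hk' => ?_).symm
  simp [h.eq_zero_of_mem_clusters k hk hk' x hx]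

lemma embeddingNorm_eq_sum_sdiff (h : IsClusterLocalized W B C Cl I σ φ ε₁ ε₂) (hx : x ∈ B) :
    embeddingNorm I φ x = ∑ k ∈ I \ univ.image σ, φ k x ^ 2 := by
  refine (sum_subset sdiff_subset fun k hk hk' => ?_).symm
  obtain ⟨j, -, rfl⟩ := mem_image.1 (not_not.1 fun hk'' => hk' (mem_sdiff.2 ⟨hk, hk''⟩))
  simp [h.eq_zero_of_mem_background j x hx]

lemma div_le_embeddingNorm (h : IsClusterLocalized W B C Cl I σ φ ε₁ ε₂) (hε₁ : ε₁ ≤ 1)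
    (hc : 0 < c) (hdeg : ∀ x, c ≤ degree W x) (hdeg' : ∀ x, degree W x ≤ r)
    (hm : ∀ j, (#(Cl j) : ℝ) = m) (hx : ∃ j, x ∈ Cl j) :
    (1 - ε₁) / (m * r) ≤ embeddingNorm I φ x := by
  obtain ⟨j, hx⟩ := hx
  have hcard : 0 < (#(Cl j) : ℝ) := by exact_mod_cast card_pos.2 ⟨x, hx⟩
  rw [← hm j]
  calc (1 - ε₁) / (#(Cl j) * r) ≤ (1 - ε₁) / vol W (Cl j) :=
        div_le_div_of_nonneg_left (sub_nonneg.2 hε₁)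
          ((mul_pos hcard hc).trans_le (card_mul_le_vol hdeg _)) (vol_le_card_mul hdeg' _)
    _ ≤ φ (σ j) x ^ 2 := h.le_sq j x hx
    _ ≤ embeddingNorm I φ x :=
        single_le_sum (f := fun k => φ k x ^ 2) (fun _ _ => sq_nonneg _) (h.mem j)

lemma embeddingNorm_le_of_mem_clusters (h : IsClusterLocalized W B C Cl I σ φ ε₁ ε₂) (hε₁ : 0 ≤ ε₁)
    (hc : 0 < c) (hdeg : ∀ x, c ≤ degree W x) (hm : ∀ j, (#(Cl j) : ℝ) = m)
    (hcard : (#C : ℝ) = Fintype.card κ * m) (hdisj : ∀ i j, i ≠ j → Disjoint (Cl i) (Cl j))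
    (hxC : x ∈ C) (hx : ∃ j, x ∈ Cl j) :
    embeddingNorm I φ x ≤ (1 + 2 * ε₁) / (m * c) := by
  classical
  obtain ⟨j, hx⟩ := hx
  rw [← hm j] at hcard ⊢
  have hm₀ : 0 < (#(Cl j) : ℝ) := by exact_mod_cast card_pos.2 ⟨x, hx⟩
  have hC : 0 < (#C : ℝ) := by exact_mod_cast card_pos.2 ⟨x, hxC⟩
  have hκ : (Fintype.card κ : ℝ) ≠ 0 := left_ne_zero_of_mul (hcard ▸ hC.ne')
  have hself : φ (σ j) x ^ 2 ≤ (1 + ε₁) / (#(Cl j) * c) :=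
    (h.sq_le j x hx).trans
      (div_le_div_of_nonneg_left (by positivity) (by positivity) (card_mul_le_vol hdeg _))
  have hother : ∀ i, i ≠ j → φ (σ i) x ^ 2 ≤ ε₁ / (#C * c) := fun i hij =>
    (h.sq_le_of_notMem i x hxC fun hxi => disjoint_left.1 (hdisj i j hij) hxi hx).trans
      (div_le_div_of_nonneg_left hε₁ (by positivity) (card_mul_le_vol hdeg _))
  rw [h.embeddingNorm_eq_sum_image hxC]
  calc ∑ i, φ (σ i) x ^ 2
      ≤ ∑ i, (ε₁ / (#C * c) + if i = j then (1 + ε₁) / (#(Cl j) * c) else 0) :=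
        sum_le_sum fun i _ => by
          split_ifs with hij
          · rw [hij]
            exact hself.trans (le_add_of_nonneg_left (by positivity))
          · simpa using hother i hij
    _ = (1 + 2 * ε₁) / (#(Cl j) * c) := by
        simp only [sum_add_distrib, sum_const, card_univ, nsmul_eq_mul, sum_ite_eq', mem_univ,
          if_true, hcard]
        field_simp
        ring

lemma embeddingNorm_le_of_mem_background (h : IsClusterLocalized W B C Cl I σ φ ε₁ ε₂)
    (hε₂ : 0 ≤ ε₂) (hc : 0 < c) (hdeg : ∀ x, c ≤ degree W x) (hx : x ∈ B) :
    embeddingNorm I φ x ≤ (#I - Fintype.card κ) * ((1 + ε₂) / (#B * c)) := by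
  have hB : 0 < (#B : ℝ) := by exact_mod_cast card_pos.2 ⟨x, hx⟩
  rw [h.embeddingNorm_eq_sum_sdiff hx, ← h.card_sdiff_image, ← nsmul_eq_mul]
  refine sum_le_card_nsmul _ _ _ fun k hk => ?_
  exact (h.sq_le_of_mem_background k (mem_sdiff.1 hk).1 (mem_sdiff.1 hk).2 x hx).trans
    (div_le_div_of_nonneg_left (by positivity) (by positivity) (card_mul_le_vol hdeg _))

theorem exists_levels (h : IsClusterLocalized W B C Cl I σ φ ε₁ ε₂) (hε₁ : 0 ≤ ε₁)
    (hε₁' : ε₁ ≤ 1) (hε₂ : 0 ≤ ε₂) (hc : 0 < c) (hcr : c ≤ r) (hdeg : ∀ x, c ≤ degree W x)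
    (hdeg' : ∀ x, degree W x ≤ r) {δ n : ℝ} (hδ₀ : 0 < δ) (hδ₁ : δ < 1) (hn : 0 < n) [Nonempty κ]
    (hB : (#B : ℝ) = (1 - δ) * n) (hC : (#C : ℝ) = δ * n)
    (hCl : ∀ j, (#(Cl j) : ℝ) = δ * n / Fintype.card κ)
    (hdisj : ∀ i j, i ≠ j → Disjoint (Cl i) (Cl j)) (hcover : ∀ x ∈ C, ∃ j, x ∈ Cl j)
    (hmargin : 0 < separationMargin δ (Fintype.card κ) #I c r ε₁ ε₂) :
    ∃ lo hi M, (0 ≤ lo ∧ lo < hi ∧ hi ≤ M) ∧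
      (hi - lo) / (2 * M)
        = 1 / 2 * (separationMargin δ (Fintype.card κ) #I c r ε₁ ε₂ / (1 + 2 * ε₁)) ∧
      (∀ x ∈ B, embeddingNorm I φ x ≤ lo) ∧ (∀ x ∈ C, hi ≤ embeddingNorm I φ x) ∧
      ∀ x ∈ C, embeddingNorm I φ x ≤ M := by
  have hK : (0 : ℝ) < Fintype.card κ := by exact_mod_cast Fintype.card_pos
  have hKI : (Fintype.card κ : ℝ) ≤ #I := by exact_mod_cast h.card_le_card
  have hC' : (#C : ℝ) = Fintype.card κ * (δ * n / Fintype.card κ) := by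
    rw [hC, mul_div_cancel₀ _ hK.ne']
  have hdiff := div_sub_mul_div_eq_separationMargin_div #I ε₁ ε₂ hδ₀ hδ₁ hK hn hc
    (hc.trans_le hcr)
  rw [← hB] at hdiff
  obtain ⟨m, hm⟩ : ∃ m, m = δ * n / Fintype.card κ := ⟨_, rfl⟩
  have hm₀ : 0 < m := hm ▸ by positivity
  rw [← hm] at hdiff hC' hCl
  refine ⟨(#I - Fintype.card κ) * ((1 + ε₂) / (#B * c)), (1 - ε₁) / (m * r),
    (1 + 2 * ε₁) / (m * c), ⟨mul_nonneg (sub_nonneg.2 hKI) (by positivity), ?_, ?_⟩, ?_,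
    fun x hx => h.embeddingNorm_le_of_mem_background hε₂ hc hdeg hx,
    fun x hx => h.div_le_embeddingNorm hε₁' hc hdeg hdeg' hCl (hcover x hx),
    fun x hx => h.embeddingNorm_le_of_mem_clusters hε₁ hc hdeg hCl hC' hdisj hx (hcover x hx)⟩
  · exact sub_pos.1 (hdiff ▸ div_pos hmargin (mul_pos hm₀ hc))
  · gcongr
    linarith
  · rw [hdiff]
    field_simp

end IsClusterLocalized

end InitialProfile

end SpectralEmbedding

open SpectralEmbedding in
theorem embedding_norm_separation_at_one_general {V ι : Type*} [Fintype V] [DecidableEq V]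
    [Nonempty V] [Fintype ι] [DecidableEq ι] (hcard : Fintype.card ι = Fintype.card V)
    {B C : Finset V} (hdisj : Disjoint B C) (hunion : B ∪ C = univ)
    {K : ℕ} (hK : 0 < K) {Cl : Fin K → Finset V}
    (hCldisj : ∀ j j', j ≠ j' → Disjoint (Cl j) (Cl j')) (hClcover : ∀ x ∈ C, ∃ j, x ∈ Cl j)
    {δ : ℝ} (hδ₀ : 0 < δ) (hδ₁ : δ < 1) (hCcard : (#C : ℝ) = δ * Fintype.card V)
    (hClcard : ∀ j, (#(Cl j) : ℝ) = δ * Fintype.card V / K)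
    {W₀ E : Matrix V V ℝ} (hW₀ : W₀.IsSymm) (hEsymm : E.IsSymm) (hE : ∀ x y, 0 ≤ E x y)
    (hEcross : ∀ x y, ¬((x ∈ B ∧ y ∈ C) ∨ (x ∈ C ∧ y ∈ B)) → E x y = 0)
    {dlow dup : ℝ} (hdlow₀ : 0 < dlow) (hdlow : ∀ x, dlow ≤ degree W₀ x)
    (hdup : ∀ x, degree W₀ x ≤ dup) {lam : ι → ℝ → ℝ} {ψ : ι → ℝ → V → ℝ}
    (hframe : IsWalkEigenframe W₀ E lam ψ)
    (hlam : ∀ k, ∀ t ∈ Set.Icc (0 : ℝ) 1, |lam k t| ≤ 1)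
    {I : Finset ι} {σ : Fin K → ι} {ε₁ ε₂ : ℝ} (hε₁ : 0 ≤ ε₁) (hε₁' : ε₁ ≤ 1) (hε₂ : 0 ≤ ε₂)
    (hA1 : IsClusterLocalized W₀ B C Cl I σ (ψ · 0) ε₁ ε₂)
    (hA2 : 0 < separationMargin δ K #I dlow dup ε₁ ε₂)
    {Δ : ℝ} (hΔ : 0 < Δ) (hgap₀ : ∀ k ∈ I, ∀ j ∉ I, 2 * Δ ≤ |lam k 0 - lam j 0|)
    (hsmall : (∑ x ∈ B, ∑ y ∈ C, E x y) / dlow ≤ Δ / 8 * (1 / (1 + Δ / 4)) *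
      Real.log (1 + 1 / 2 * (separationMargin δ K #I dlow dup ε₁ ε₂ / (1 + 2 * ε₁)))) :
    ∃ τ, (∀ x ∈ C, τ < embeddingNorm I (ψ · 1) x) ∧ ∀ x ∈ B, embeddingNorm I (ψ · 1) x < τ := by
  have : Nonempty (Fin K) := ⟨0, hK⟩
  have hn : (0 : ℝ) < Fintype.card V := by exact_mod_cast Fintype.card_pos
  have hBcard : (#B : ℝ) = (1 - δ) * Fintype.card V := by
    have hcards := card_union_of_disjoint hdisj
    rw [hunion, card_univ] at hcards
    push_cast [hcards] at hCcard ⊢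
    linarith
  obtain ⟨lo, hi, M, ⟨hlo₀, hlohi, hhiM⟩, hratio, hlo, hhi, hM⟩ :=
    hA1.exists_levels hε₁ hε₁' hε₂ hdlow₀ ((hdlow _).trans (hdup (Classical.arbitrary V)))
      hdlow hdup hδ₀ hδ₁ hn hBcard hCcard (by simpa using hClcard) hCldisj hClcover
      (by simpa using hA2)
  refine hframe.exists_threshold hcard hW₀ hEsymm hE hlam hdlow₀ hdlow hΔ hgap₀
    (fun x => mem_union.1 (hunion ▸ mem_univ x)) hhi hlo hM hlo₀ hlohi hhiM ?_
  rw [hratio, Fintype.card_fin, vol_univ_eq_two_mul_sum hdisj hunion hEsymm hEcross, mul_div_assoc]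
  linarith

/-- Separation at `t = 1` by the spectral embedding norm: under
Assumption A1 at `t = 0`, Assumption A2 (`(#) > 0`), an initial `I`-eigen-gap
`Δ(0) ≥ 2Δ`, the smallness condition (ii) on the cluster-background connection
`C_conn`, and the evolution equation for `S(x,t) = ∑_{k∈I} ψ_k(t)(x)²` on `(0,1)`,
there is a threshold `τ` with `S(x,1) > τ` on `C` and `S(x,1) < τ` on `B`. -/
theorem embedding_norm_separation_at_one
    {V : Type*} [Fintype V] [DecidableEq V] [Nonempty V]
    (B C : Finset V) (hdisj : Disjoint B C) (hunion : B ∪ C = Finset.univ)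
    (hBne : B.Nonempty) (hCne : C.Nonempty)
    (K : ℕ) (hK : 0 < K) (Cl : Fin K → Finset V)
    (hClsub : ∀ j, Cl j ⊆ C)
    (hCldisj : ∀ j j', j ≠ j' → Disjoint (Cl j) (Cl j'))
    (hClcover : ∀ x ∈ C, ∃ j, x ∈ Cl j)
    (δ : ℝ) (hδ0 : 0 < δ) (hδ1 : δ < 1)
    (hCcard : (C.card : ℝ) = δ * Fintype.card V)
    (hClcard : ∀ j, ((Cl j).card : ℝ) = δ * Fintype.card V / K)
    (W0 E : Matrix V V ℝ)
    (hW0symm : W0.IsSymm) (hW0nonneg : ∀ x y, 0 ≤ W0 x y)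
    (hW0cross : ∀ x y, ((x ∈ B ∧ y ∈ C) ∨ (x ∈ C ∧ y ∈ B)) → W0 x y = 0)
    (hEsymm : E.IsSymm) (hEnonneg : ∀ x y, 0 ≤ E x y)
    (hEcross : ∀ x y, ¬((x ∈ B ∧ y ∈ C) ∨ (x ∈ C ∧ y ∈ B)) → E x y = 0)
    (Cconn : ℝ) (hCconn : Cconn = ∑ x ∈ B, ∑ y ∈ C, E x y)
    (d0low d0up : ℝ)
    (hd0low : d0low = Finset.univ.inf' Finset.univ_nonempty (fun x => ∑ y, W0 x y))
    (hd0up : d0up = Finset.univ.sup' Finset.univ_nonempty (fun x => ∑ y, W0 x y))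
    (hd0pos : 0 < d0low)
    -- differentiable D(t)-orthonormal eigenpairs of P(t) = D(t)⁻¹W(t), indexed by k : V
    (lam : V → ℝ → ℝ) (ψ : V → ℝ → V → ℝ)
    (hlamdiff : ∀ k, DifferentiableOn ℝ (lam k) (Set.Icc (0 : ℝ) 1))
    (hψdiff : ∀ k x, DifferentiableOn ℝ (fun s => ψ k s x) (Set.Icc (0 : ℝ) 1))
    (heig : ∀ k, ∀ t ∈ Set.Icc (0 : ℝ) 1, ∀ x,
      ∑ y, (W0 x y + t * E x y) * ψ k t y
        = lam k t * ((∑ y, (W0 x y + t * E x y)) * ψ k t x))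
    (horth : ∀ t ∈ Set.Icc (0 : ℝ) 1, ∀ k l,
      ∑ x, ψ k t x * (∑ y, (W0 x y + t * E x y)) * ψ l t x = if k = l then 1 else 0)
    (hlambound : ∀ k, ∀ t ∈ Set.Icc (0 : ℝ) 1, |lam k t| ≤ 1)
    (I : Finset V)
    (ε1 ε2 : ℝ) (hε1 : 0 ≤ ε1) (hε1' : ε1 < 1) (hε2 : 0 ≤ ε2)
    -- Assumption A1 at t = 0: K eigenvectors in I supported on C, one per cluster
    (σ : Fin K → V) (hσinj : Function.Injective σ)
    (hσI : ∀ j, σ j ∈ I)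
    (hCsupp : ∀ j, ∀ x ∈ B, ψ (σ j) 0 x = 0)
    (hBsupp : ∀ k ∈ I, k ∉ Finset.univ.image σ → ∀ x ∈ C, ψ k 0 x = 0)
    (hlow : ∀ j, ∀ x ∈ Cl j,
      (1 - ε1) / (∑ y ∈ Cl j, ∑ z, W0 y z) ≤ (ψ (σ j) 0 x) ^ 2)
    (hup : ∀ j, ∀ x ∈ Cl j,
      (ψ (σ j) 0 x) ^ 2 ≤ (1 + ε1) / (∑ y ∈ Cl j, ∑ z, W0 y z))
    (hoff : ∀ j, ∀ x ∈ C, x ∉ Cl j →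
      (ψ (σ j) 0 x) ^ 2 ≤ ε1 / (∑ y ∈ C, ∑ z, W0 y z))
    (hBbound : ∀ k ∈ I, k ∉ Finset.univ.image σ →
      ∀ x ∈ B, (ψ k 0 x) ^ 2 ≤ (1 + ε2) / (∑ y ∈ B, ∑ z, W0 y z))
    -- Assumption A2: (#) > 0
    (hash : ℝ)
    (hhash : hash = d0low * (1 - ε1) / d0up
      - (δ / (1 - δ)) * (((I.card : ℝ) - K) / K) * (1 + ε2))
    (hA2 : 0 < hash)
    -- condition (i): initial I-eigen-gap
    (Δ : ℝ) (hΔ : 0 < Δ)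
    (hgap0 : ∀ i ∈ I, ∀ j ∉ I, 2 * Δ ≤ |lam i 0 - lam j 0|)
    -- condition (ii): smallness of the cluster-background connection
    (hC : Cconn / d0low
      ≤ (Δ / 8) * (1 / (1 + Δ / 4)) * Real.log (1 + (1 / 2) * (hash / (1 + 2 * ε1))))
    -- the evolution equation of S(x,t) on (0,1)
    (hevol : ∀ x, ∀ t ∈ Set.Ioo (0 : ℝ) 1,
      HasDerivAt (fun s => ∑ k ∈ I, (ψ k s x) ^ 2)
        (-(∑ k ∈ I, ∑ j ∈ I, (∑ y, ψ j t y * (∑ z, E y z) * ψ k t y) * ψ k t x * ψ j t x)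
          + 2 * ∑ k ∈ I, ∑ j ∈ Iᶜ,
              (((∑ y, ∑ z, ψ j t y * E y z * ψ k t z)
                  - lam k t * (∑ y, ψ j t y * (∑ z, E y z) * ψ k t y))
                / (lam k t - lam j t)) * ψ k t x * ψ j t x) t) :
    ∃ τ : ℝ,
      (∀ x ∈ C, τ < ∑ k ∈ I, (ψ k 1 x) ^ 2) ∧
      (∀ x ∈ B, ∑ k ∈ I, (ψ k 1 x) ^ 2 < τ) := by
  subst hd0low hd0up hhash hCconn
  exact embedding_norm_separation_at_one_general rfl hdisj hunion hK hCldisj hClcover hδ0 hδ1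
    hCcard hClcard hW0symm hEsymm hEnonneg hEcross hd0pos (fun x => inf'_le _ (mem_univ x))
    (fun x => le_sup' _ (mem_univ x))
    ⟨hlamdiff, fun k => differentiableOn_pi.2 (hψdiff k), fun k t ht => funext (heig k t ht), horth⟩
    hlambound hε1 hε1'.le hε2 ⟨hσinj, hσI, hCsupp, hBsupp, hlow, hup, hoff, hBbound⟩ hA2 hΔ hgap0 hC
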